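/- Fix $i$ with $1 \le i \le n+1$. For $\lambda \in \mathbb{Z}^{n+1}$ let $\lambda' \in \mathbb{Z}^n$ be obtained by omitting the $i$-th entry. If $\lambda, \mu \in \mathbb{Z}^{n+1}$ satisfy $\lambda_i = \mu_i$, then $\lambda \le \mu$ in the Bruhat order on $\mathbb{Z}^{n+1}$ if and only if $\lambda' \le \mu'$ in the Bruhat order on $\mathbb{Z}^n$. -/

import Mathlib

/-!
The Bruhat order on `ℤⁿ` has a numerical description from which the deletion of a common entry can
be read off. Call `e ∈ ℤⁿ` an alcove point if `e_i ≤ e_j + k` for every positive affine root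
`ε_i - ε_j + k` (`IsThr`). Then `τ ≤ η` if and only if `∑ τ_i = ∑ η_i` and
`∑ max(τ_i + e_i, 0) ≤ ∑ max(η_i + e_i, 0)` for all alcove points `e` (`Crit`, `xLe_iff_crit`).
This is the containment of `n`-cores, written in coordinates. A common entry contributes the same
summand on both sides, the restriction of an alcove point to fewer coordinates is an alcove point,
and every alcove point arises by such a restriction (`isThr_extend`); so the criterion is unchanged
by the deletion (`crit_delete`).

The root `ε_i - ε_j + k` has height `n k + j - i`, and it is positive if and only if its height is.
For a positive root `α` a comparison of inversion sets gives `ℓ(w) < ℓ(w s_α)` if and only if `wα` is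
positive (`len_lt_of_neg`, `len_lt_of_pos`), hence an explicit description of Bruhat steps
(`bruhatStep_iff`).

*Bruhat implies the criterion* (`crit_of_bruhatLe`). On translation parts a Bruhat step is a
reflection `s_β` with `β` positive and `β(τ) ≥ 0`. It spreads two entries apart, relative to `e`, and
keeps their sum, so convexity of `max(·, 0)` gives the inequalities.

*The criterion implies Bruhat* (`xLe_of_crit`), by induction on `ℓ(m_η)`. If no simple root is
negative on `η`, then `-η` is an alcove point, and the inequality for `e = -η` forces `τ = η`.
Otherwise let `α` be simple with `α(η) < 0`. The criterion passes from `(τ, η)` to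
`(min(τ, s_α τ), s_α η)` (`crit_descend`), and the Bruhat relation comes back from there by the
lifting property (`lift`), because `m_{s_α τ} = s_α m_τ` whenever `α(τ) ≠ 0` (`minRep_act`).
-/

/-- An element `t_τ ∘ u` of the extended affine Weyl group `W = Sₙ ⋉ ℤⁿ`
of type `A_{n-1}`:  `perm` is the finite part `u ∈ Sₙ`, `tr` the translation `τ`. -/
structure AffW (n : ℕ) where
  perm : Equiv.Perm (Fin n)
  tr : Fin n → ℤ

namespace AffW

variable {n : ℕ}

/-- The affine action on `X = ℤⁿ` : `(t_τ u)(x) = u·x + τ` where `(u·x)_i = x_{u⁻¹ i}`. -/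
def act (w : AffW n) (x : Fin n → ℤ) : Fin n → ℤ :=
  fun i => x (w.perm⁻¹ i) + w.tr i

/-- Group multiplication (composition of affine maps). -/
def mul (a b : AffW n) : AffW n :=
  ⟨a.perm * b.perm, fun i => b.tr (a.perm⁻¹ i) + a.tr i⟩

def one (n : ℕ) : AffW n := ⟨1, 0⟩

/-- An affine root `ε_i - ε_j + k`, recorded as the data `(i, j, k)`. -/
abbrev Root (n : ℕ) := Fin n × Fin n × ℤ

/-- A positive affine root: `Δ⁺ = Δ_f⁺ ∪ (Δ_f + ℤ_{>0})`. -/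
def IsPos (α : Root n) : Prop := 0 < α.2.2 ∨ (α.2.2 = 0 ∧ α.1 < α.2.1)

/-- A negative affine root. -/
def IsNeg (α : Root n) : Prop := IsPos (α.2.1, α.1, -α.2.2)

/-- Action of `w` on affine roots, determined by `(wα)(x) = α(w⁻¹x)`. -/
def rootAct (w : AffW n) (α : Root n) : Root n :=
  (w.perm α.1, w.perm α.2.1, α.2.2 - w.tr (w.perm α.1) + w.tr (w.perm α.2.1))

/-- The length `ℓ(w) = #{α ∈ Δ⁺ ∣ wα ∈ -Δ⁺}`. -/
noncomputable def len (w : AffW n) : ℕ :=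
  Set.ncard {α : Root n | IsPos α ∧ IsNeg (rootAct w α)}

/-- The affine reflection `s_{ε_i - ε_j + k}` as an element of `W`. -/
def refl (i j : Fin n) (k : ℤ) : AffW n :=
  ⟨Equiv.swap i j, fun m => if m = i then -k else if m = j then k else 0⟩

/-- Bruhat covering-type relation: right multiplication by a reflection which
increases the length. -/
def BruhatStep (a b : AffW n) : Prop :=
  (∃ i j k, i ≠ j ∧ b = mul a (refl i j k)) ∧ len a < len b

/-- The Bruhat order on the extended affine Weyl group. -/
def BruhatLe : AffW n → AffW n → Prop := Relation.ReflTransGen BruhatStep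

/-- `m_τ`, the shortest element of the coset `t_τ Sₙ`. -/
noncomputable def minRep (τ : Fin n → ℤ) : AffW n :=
  ⟨(Finset.exists_min_image (Finset.univ : Finset (Equiv.Perm (Fin n)))
      (fun u => len (⟨u, τ⟩ : AffW n)) ⟨1, Finset.mem_univ 1⟩).choose, τ⟩

/-- The Bruhat order on `X = ℤⁿ` induced from the extended affine Weyl group:
`τ ≤ η ↔ m_τ ≤ m_η`. -/
noncomputable def XLe (τ η : Fin n → ℤ) : Prop := BruhatLe (minRep τ) (minRep η)

/-! ### Heights of affine roots -/

/-- The height of the affine root `ε_i - ε_j + k`; it is additive in the root and its sign decides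
positivity. -/
def ht (α : Root n) : ℤ := n * α.2.2 + (α.2.1 : ℕ) - (α.1 : ℕ)

theorem isPos_iff (α : Root n) : IsPos α ↔ 0 < ht α := by
  obtain ⟨i, j, k⟩ := α
  simp only [IsPos, ht]
  have hi := i.2
  have hj := j.2
  rcases lt_trichotomy k 0 with h | h | h
  · have : (n : ℤ) * k ≤ n * (-1) := mul_le_mul_of_nonneg_left (by omega) (by omega)
    constructor <;> intro <;> omega
  · subst h
    simp only [Fin.lt_def, mul_zero, lt_irrefl, false_or, true_and]
    constructor <;> intro <;> omega
  · have : (n : ℤ) * 1 ≤ n * k := mul_le_mul_of_nonneg_left (by omega) (by omega)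
    constructor <;> intro <;> omega

theorem isNeg_iff (α : Root n) : IsNeg α ↔ ht α < 0 := by
  rw [IsNeg, isPos_iff]
  simp only [ht, mul_neg]
  constructor <;> intro <;> omega

theorem eq_of_mul_add {i j : Fin n} {k : ℤ} (h : (n : ℤ) * k + (j : ℕ) - (i : ℕ) = 0) :
    i = j ∧ k = 0 := by
  have hi := i.2
  have hj := j.2
  rcases lt_trichotomy k 0 with h' | h' | h'
  · have : (n : ℤ) * k ≤ n * (-1) := mul_le_mul_of_nonneg_left (by omega) (by omega)
    omega
  · subst h'
    exact ⟨Fin.ext (by omega), rfl⟩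
  · have : (n : ℤ) * 1 ≤ n * k := mul_le_mul_of_nonneg_left (by omega) (by omega)
    omega

theorem ht_ne_zero {α : Root n} (h : α.1 ≠ α.2.1) : ht α ≠ 0 :=
  fun h0 => h (eq_of_mul_add h0).1

theorem nonneg_of_ht {i j : Fin n} {k : ℤ} (h : 0 ≤ ht (i, j, k)) : 0 ≤ k := by
  simp only [ht] at h
  have hi := i.2
  have hj := j.2
  by_contra h'
  have : (n : ℤ) * k ≤ n * (-1) := mul_le_mul_of_nonneg_left (by omega) (by omega)
  omega

theorem ht_of_pos {i j : Fin n} {k : ℤ} (h : 0 < k) : 0 < ht (i, j, k) :=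
  (isPos_iff _).1 (Or.inl h)

/-! ### Reflections and windows -/

theorem inv_self_apply (u : Equiv.Perm (Fin n)) (x : Fin n) : u⁻¹ (u x) = x :=
  u.symm_apply_apply x

theorem self_inv_apply (u : Equiv.Perm (Fin n)) (x : Fin n) : u (u⁻¹ x) = x :=
  u.apply_symm_apply x

/-- The window of `w`: the values on `0, …, n-1` of the `n`-periodic permutation of `ℤ` attached
to `w`. -/
def win (w : AffW n) (j : Fin n) : ℤ := n * w.tr (w.perm j) + (w.perm j : ℕ)

theorem ht_rootAct (w : AffW n) (i j : Fin n) (k : ℤ) :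
    ht (rootAct w (i, j, k)) = n * k + win w j - win w i := by
  simp only [ht, rootAct, win]
  ring

theorem win_injective (w : AffW n) : Function.Injective (win w) := by
  intro i j h
  have : (n : ℤ) * (w.tr (w.perm j) - w.tr (w.perm i)) + (w.perm j : ℕ) - (w.perm i : ℕ) = 0 := by
    simp only [win] at h
    linarith
  exact w.perm.injective (eq_of_mul_add this).1

@[ext] theorem ext' {a b : AffW n} (h₁ : a.perm = b.perm) (h₂ : a.tr = b.tr) : a = b := by
  cases a; cases b; simp_all

theorem mul_assoc' (a b c : AffW n) : mul (mul a b) c = mul a (mul b c) := by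
  ext i
  · simp [mul, _root_.mul_assoc]
  · simp [mul, add_assoc]

theorem rootAct_mul (a b : AffW n) (α : Root n) :
    rootAct (mul a b) α = rootAct a (rootAct b α) := by
  simp only [rootAct, mul, Equiv.Perm.mul_apply, inv_self_apply, Prod.mk.injEq]
  refine ⟨trivial, trivial, by ring⟩

theorem refl_symm {i j : Fin n} (h : i ≠ j) (k : ℤ) : refl i j k = refl j i (-k) := by
  ext l
  · simp [refl, Equiv.swap_comm]
  · simp only [refl, neg_neg]
    split_ifs <;> simp_all

theorem refl_mul_self {i j : Fin n} (h : i ≠ j) (k : ℤ) : mul (refl i j k) (refl i j k) = one n := by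
  ext l
  · simp [mul, refl, one]
  · simp only [mul, refl, one, Equiv.swap_inv, Pi.zero_apply]
    rcases eq_or_ne l i with rfl | hi
    · simp [h.symm]
    · rcases eq_or_ne l j with rfl | hj
      · simp [hi]
      · simp [Equiv.swap_apply_of_ne_of_ne hi hj, hi, hj]

theorem one_mul' (a : AffW n) : mul (one n) a = a := by
  ext l <;> simp [mul, one]

theorem mul_one' (a : AffW n) : mul a (one n) = a := by
  ext l <;> simp [mul, one]

theorem rootAct_one (α : Root n) : rootAct (one n) α = α := by
  simp [rootAct, one]

theorem rootAct_refl_refl {p q : Fin n} (h : p ≠ q) (m : ℤ) (α : Root n) :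
    rootAct (refl p q m) (rootAct (refl p q m) α) = α := by
  rw [← rootAct_mul, refl_mul_self h, rootAct_one]

/-- `w s_γ = s_{wγ} w`. -/
theorem mul_refl (w : AffW n) (i j : Fin n) (k : ℤ) :
    mul w (refl i j k) =
      mul (refl (w.perm i) (w.perm j) (k - w.tr (w.perm i) + w.tr (w.perm j))) w := by
  ext l
  · simp only [mul, refl]
    rw [Equiv.mul_swap_eq_swap_mul]
  · obtain ⟨x, rfl⟩ := w.perm.surjective l
    simp only [mul, refl, Equiv.swap_inv, inv_self_apply, EmbeddingLike.apply_eq_iff_eq]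
    rcases eq_or_ne x i with rfl | hi
    · simp
      ring
    · rcases eq_or_ne x j with rfl | hj
      · simp [hi]
        ring
      · rw [Equiv.swap_apply_of_ne_of_ne (by simpa using hi) (by simpa using hj)]
        simp [hi, hj]

/-- Pairing of the coroot of `ε_p - ε_q` with the coordinate `j`. -/
def delta (p q j : Fin n) : ℤ := (if j = p then 1 else 0) - (if j = q then 1 else 0)

theorem win_mul_refl (w : AffW n) {p q : Fin n} (h : p ≠ q) (m : ℤ) (j : Fin n) :
    win (mul w (refl p q m)) j = win w j + ht (rootAct w (p, q, m)) * delta p q j := by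
  rw [ht_rootAct]
  simp only [win, mul, refl, delta, Equiv.Perm.mul_apply, inv_self_apply]
  rcases eq_or_ne j p with rfl | hp
  · simp [h, h.symm]; ring
  · rcases eq_or_ne j q with rfl | hq
    · simp [hp]; ring
    · simp [Equiv.swap_apply_of_ne_of_ne hp hq, hp, hq]

theorem win_refl {p q : Fin n} (h : p ≠ q) (m : ℤ) (j : Fin n) :
    win (refl p q m) j = (j : ℕ) + ht (p, q, m) * delta p q j := by
  have := win_mul_refl (one n) h m j
  rw [one_mul', rootAct_one] at this
  simpa [win, one] using this

/-! ### Length and reflections -/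

theorem finite_inv (w : AffW n) : {α : Root n | IsPos α ∧ IsNeg (rootAct w α)}.Finite := by
  obtain ⟨B, hB⟩ : ∃ B : ℤ, ∀ i, |w.tr i| ≤ B := by
    refine ⟨∑ i, |w.tr i|, fun i => ?_⟩
    exact Finset.single_le_sum (f := fun i => |w.tr i|) (fun _ _ => abs_nonneg _)
      (Finset.mem_univ i)
  refine Set.Finite.subset
    (Set.finite_univ.prod (Set.finite_univ.prod (Set.finite_Icc (0 : ℤ) (2 * B)))) ?_
  rintro ⟨i, j, k⟩ ⟨h₁, h₂⟩
  simp only [IsPos, IsNeg, rootAct] at h₁ h₂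
  have h₃ := abs_le.1 (hB (w.perm i))
  have h₄ := abs_le.1 (hB (w.perm j))
  simp only [Set.mem_prod, Set.mem_univ, Set.mem_Icc, true_and]
  omega

/-- The map `γ ↦ s_α γ` if that is positive, `γ ↦ γ` otherwise, embeds the inversions of `w s_α`
into the inversions of `w` other than `α`. -/
theorem len_lt_of_neg (w : AffW n) {p q : Fin n} (h : p ≠ q) (m : ℤ) (hα : 0 < ht (p, q, m))
    (hw : ht (rootAct w (p, q, m)) < 0) : len (mul w (refl p q m)) < len w := by
  classical
  set s := refl p q m with hs
  have hss : ∀ γ, rootAct s (rootAct s γ) = γ := rootAct_refl_refl h m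
  have key : ∀ γ : Root n, ∃ d : ℤ, ht (rootAct s γ) = ht γ + ht (p, q, m) * d ∧
      ht (rootAct (mul w s) γ) = ht (rootAct w γ) + ht (rootAct w (p, q, m)) * d := by
    rintro ⟨i, j, k⟩
    refine ⟨delta p q j - delta p q i, ?_, ?_⟩
    · rw [ht_rootAct, win_refl h, win_refl h, show ht (i, j, k) = n * k + (j : ℕ) - (i : ℕ) from rfl]
      ring
    · rw [ht_rootAct (mul w s), win_mul_refl w h, win_mul_refl w h, ht_rootAct w i]
      ring
  have hsα : ht (rootAct s (p, q, m)) = - ht (p, q, m) := by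
    rw [ht_rootAct, win_refl h, win_refl h]
    simp only [delta, h, h.symm, ht, if_true, if_false]
    ring
  have hwsα : ht (rootAct (mul w s) (p, q, m)) = - ht (rootAct w (p, q, m)) := by
    rw [ht_rootAct, win_mul_refl w h, win_mul_refl w h, ht_rootAct]
    simp only [delta, h, h.symm, if_true, if_false]
    ring
  have hmem : ((p, q, m) : Root n) ∈ {α : Root n | IsPos α ∧ IsNeg (rootAct w α)} :=
    ⟨(isPos_iff _).2 hα, (isNeg_iff _).2 hw⟩
  refine lt_of_le_of_lt ?_ (Set.ncard_sdiff_singleton_lt_of_mem hmem (finite_inv w))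
  refine Set.ncard_le_ncard_of_injOn (fun γ => if 0 < ht (rootAct s γ) then rootAct s γ else γ)
    ?_ ?_ (finite_inv w).sdiff
  · intro γ hγ
    simp only [Set.mem_ofPred_eq, isPos_iff, isNeg_iff] at hγ
    obtain ⟨d, hd₁, hd₂⟩ := key γ
    simp only [Set.mem_sdiff, Set.mem_ofPred_eq, Set.mem_singleton_iff, isPos_iff, isNeg_iff]
    split_ifs with hc
    · refine ⟨⟨hc, by rw [← rootAct_mul]; exact hγ.2⟩, fun he => ?_⟩
      rw [← hss γ, he, hsα] at hγ
      omega
    · refine ⟨⟨hγ.1, ?_⟩, fun he => ?_⟩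
      · have hd : d < 0 := by
          by_contra hd
          have := mul_nonneg hα.le (not_lt.1 hd)
          omega
        have := mul_pos_of_neg_of_neg hw hd
        omega
      · rw [he, hwsα] at hγ
        omega
  · intro γ₁ h₁ γ₂ h₂ he
    simp only [Set.mem_ofPred_eq, isPos_iff, isNeg_iff] at h₁ h₂
    dsimp only at he
    split_ifs at he with c₁ c₂ c₂
    · rw [← hss γ₁, he, hss]
    · rw [← he, hss] at c₂
      omega
    · rw [he, hss] at c₁
      omega
    · exact he

theorem len_lt_of_pos (w : AffW n) {p q : Fin n} (h : p ≠ q) (m : ℤ) (hα : 0 < ht (p, q, m))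
    (hw : 0 < ht (rootAct w (p, q, m))) : len w < len (mul w (refl p q m)) := by
  have := len_lt_of_neg (mul w (refl p q m)) h m hα ?_
  · rwa [mul_assoc', refl_mul_self h, mul_one'] at this
  · have h' : ht (rootAct (mul w (refl p q m)) (p, q, m)) = - ht (rootAct w (p, q, m)) := by
      rw [ht_rootAct, win_mul_refl w h, win_mul_refl w h, ht_rootAct]
      simp only [delta, h, h.symm, if_true, if_false]
      ring
    omega

theorem bruhatStep_iff (a b : AffW n) : BruhatStep a b ↔
    ∃ i j k, i ≠ j ∧ 0 < ht (i, j, k) ∧ 0 < ht (rootAct a (i, j, k)) ∧ b = mul a (refl i j k) := by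
  constructor
  · rintro ⟨⟨i, j, k, hij, rfl⟩, hl⟩
    have main : ∀ (i j : Fin n) (k : ℤ), i ≠ j → 0 < ht (i, j, k) →
        len a < len (mul a (refl i j k)) → 0 < ht (rootAct a (i, j, k)) := by
      intro i j k hij hp hl
      by_contra hn
      have h0 : ht (rootAct a (i, j, k)) ≠ 0 := ht_ne_zero (by simpa [rootAct] using hij)
      have := len_lt_of_neg a hij k hp (by omega)
      omega
    have h0 : ht (i, j, k) ≠ 0 := ht_ne_zero hij
    rcases lt_or_gt_of_ne h0 with h' | h'
    · have hp : 0 < ht (j, i, -k) := by simp only [ht, mul_neg] at h' ⊢; omega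
      rw [refl_symm hij] at hl ⊢
      exact ⟨j, i, -k, hij.symm, hp, main j i (-k) hij.symm hp hl, rfl⟩
    · exact ⟨i, j, k, hij, h', main i j k hij h' hl, rfl⟩
  · rintro ⟨i, j, k, hij, h₁, h₂, rfl⟩
    exact ⟨⟨i, j, k, hij, rfl⟩, len_lt_of_pos a hij k h₁ h₂⟩

/-- If the positive root `α` satisfies `α(τ) > 0`, where `τ` is the translation part of `a`, then
`a < s_α a`. -/
theorem step_left (a : AffW n) {p q : Fin n} (h : p ≠ q) (m : ℤ) (hα : 0 < ht (p, q, m))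
    (hτ : 0 < a.tr p - a.tr q + m) : BruhatStep a (mul (refl p q m) a) := by
  rw [bruhatStep_iff]
  refine ⟨a.perm⁻¹ p, a.perm⁻¹ q, a.tr p - a.tr q + m, by simpa using h, ht_of_pos hτ, ?_, ?_⟩
  · simp only [rootAct, self_inv_apply]
    rwa [show a.tr p - a.tr q + m - a.tr p + a.tr q = m by ring]
  · rw [mul_refl]
    simp only [self_inv_apply]
    rw [show a.tr p - a.tr q + m - a.tr p + a.tr q = m by ring]

/-! ### Simple reflections and lifting -/

/-- A simple reflection permutes the positive roots other than its own. -/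
theorem ht_simple_pos {p q : Fin n} (h : p ≠ q) {m : ℤ} (hα : ht (p, q, m) = 1) {β : Root n}
    (hβ : β.1 ≠ β.2.1) (hp : 0 < ht β) (hne : β ≠ (p, q, m)) :
    0 < ht (rootAct (refl p q m) β) := by
  have hnz : ht (rootAct (refl p q m) β) ≠ 0 := ht_ne_zero (by simpa [rootAct] using hβ)
  obtain ⟨i, j, k⟩ := β
  have hf : ht (rootAct (refl p q m) (i, j, k)) = ht (i, j, k) + (delta p q j - delta p q i) := by
    rw [ht_rootAct, win_refl h, win_refl h, hα, ht]
    ring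
  by_cases hd : -1 ≤ delta p q j - delta p q i
  · omega
  · have hij : i = p ∧ j = q := by
      simp only [delta] at hd
      split_ifs at hd <;> simp_all
    obtain ⟨rfl, rfl⟩ := hij
    have hd2 : delta i j j - delta i j i = -2 := by simp [delta, h, h.symm]
    rw [hf, hd2]
    have hn : 2 ≤ n := by
      have := i.2; have := j.2; have := Fin.val_ne_of_ne h; omega
    have hk : m < k := by
      refine lt_of_le_of_ne ?_ (fun e => hne (by rw [e]))
      by_contra hlt
      simp only [ht] at hp hα
      have : (n : ℤ) * k ≤ n * (m - 1) := mul_le_mul_of_nonneg_left (by omega) (by omega)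
      rw [mul_sub] at this
      omega
    have : (n : ℤ) * (m + 1) ≤ n * k := mul_le_mul_of_nonneg_left (by omega) (by omega)
    rw [mul_add] at this
    simp only [ht] at hα ⊢
    omega

/-- The lifting property for left multiplication by a simple reflection. -/
theorem lift {p q : Fin n} (h : p ≠ q) {m : ℤ} (hα : ht (p, q, m) = 1) {a b : AffW n}
    (hab : BruhatLe a b) : BruhatLe (mul (refl p q m) a) b ∨
      BruhatLe (mul (refl p q m) a) (mul (refl p q m) b) := by
  induction hab with
  | refl => exact Or.inr Relation.ReflTransGen.refl
  | @tail z y _ hzy ih =>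
    rcases ih with ih | ih
    · exact Or.inl (ih.tail hzy)
    obtain ⟨i, j, k, hij, h₁, h₂, rfl⟩ := (bruhatStep_iff _ _).1 hzy
    by_cases he : rootAct z (i, j, k) = (p, q, m)
    · -- The step from `z` is then left multiplication by the simple reflection itself.
      left
      simp only [rootAct, Prod.mk.injEq] at he
      rw [mul_refl, he.1, he.2.1, ← he.1, ← he.2.1, he.2.2, he.1, he.2.1]
      exact ih
    · right
      refine ih.tail ((bruhatStep_iff _ _).2 ⟨i, j, k, hij, h₁, ?_, (mul_assoc' _ _ _).symm⟩)
      rw [rootAct_mul]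
      exact ht_simple_pos h hα (by simpa [rootAct] using hij) h₂ he

/-! ### Minimal coset representatives -/

/-- The window of `m_τ` is increasing: a descent could be removed inside the coset, which would
lower the length. -/
theorem minRep_strictMono (τ : Fin n → ℤ) : StrictMono (win (minRep τ)) := by
  intro i j hij
  by_contra hn
  have hne : win (minRep τ) j ≠ win (minRep τ) i := fun e => hij.ne' (win_injective _ e)
  have hlt : ht (rootAct (minRep τ) (i, j, 0)) < 0 := by
    rw [ht_rootAct]
    simp only [mul_zero]
    omega
  have hp : 0 < ht (i, j, (0 : ℤ)) := (isPos_iff _).1 (Or.inr ⟨rfl, hij⟩)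
  have hl := len_lt_of_neg (minRep τ) hij.ne 0 hp hlt
  have hmin := (Finset.exists_min_image (Finset.univ : Finset (Equiv.Perm (Fin n)))
      (fun u => len (⟨u, τ⟩ : AffW n)) ⟨1, Finset.mem_univ 1⟩).choose_spec.2
      ((minRep τ).perm * Equiv.swap i j) (Finset.mem_univ _)
  have he : mul (minRep τ) (refl i j 0) = ⟨(minRep τ).perm * Equiv.swap i j, τ⟩ := by
    ext l
    · rfl
    · simp [mul, refl, minRep]
  rw [he] at hl
  exact absurd hl (not_lt.2 hmin)

theorem eq_of_strictMono {a b : AffW n} (ha : StrictMono (win a)) (hb : StrictMono (win b))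
    (h : a.tr = b.tr) : a = b := by
  have hm : StrictMono (a.perm⁻¹ * b.perm) := by
    intro i j hij
    have := hb hij
    rw [← ha.lt_iff_lt]
    simpa [win, h] using this
  have : a.perm⁻¹ * b.perm = 1 := by
    have hs : Set.range (a.perm⁻¹ * b.perm : Equiv.Perm (Fin n)) = Set.range (id : Fin n → Fin n) := by
      rw [Set.range_id, Equiv.range_eq_univ]
    exact Equiv.ext fun x => congrFun ((StrictMono.range_inj hm strictMono_id).1 hs) x
  ext1
  · exact inv_mul_eq_one.1 this
  · exact h

theorem eq_minRep {a : AffW n} (ha : StrictMono (win a)) : minRep a.tr = a :=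
  eq_of_strictMono (minRep_strictMono _) ha rfl

/-- For a simple root `α` with `α(τ) ≠ 0`, left multiplication by `s_α` keeps coset
representatives minimal: it moves two window entries by one, and `α(τ) ≠ 0` prevents them from
trading places. -/
theorem minRep_act {p q : Fin n} (h : p ≠ q) {m : ℤ} (hα : ht (p, q, m) = 1) (τ : Fin n → ℤ)
    (hτ : τ p - τ q + m ≠ 0) : minRep (act (refl p q m) τ) = mul (refl p q m) (minRep τ) := by
  refine eq_minRep (a := mul (refl p q m) (minRep τ)) ?_
  set a := minRep τ with ha
  have hw : ∀ j, win (mul (refl p q m) a) j = win a j + delta p q (a.perm j) := by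
    intro j
    have := win_refl h m (a.perm j)
    rw [hα] at this
    simp only [win, mul, Equiv.Perm.mul_apply, inv_self_apply] at this ⊢
    rw [mul_add]
    omega
  intro i j hij
  have h1 := minRep_strictMono τ hij
  rw [← ha] at h1
  have hne : win (mul (refl p q m) a) i ≠ win (mul (refl p q m) a) j :=
    fun e => hij.ne (win_injective _ e)
  rw [hw, hw] at hne ⊢
  by_cases hc : a.perm i = p ∧ a.perm j = q
  · have hd : delta p q (a.perm i) = 1 ∧ delta p q (a.perm j) = -1 := by
      simp [delta, hc.1, hc.2, h, h.symm]
    have h2 : win a j ≠ win a i + 1 := by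
      simp only [win, hc.1, hc.2]
      intro e
      have h3 : (n : ℤ) * (τ p - τ q + m) = 0 := by
        simp only [ht] at hα
        have : a.tr = τ := rfl
        rw [this] at e
        linarith
      have hn : (n : ℤ) ≠ 0 := by
        have := p.2
        omega
      exact (mul_ne_zero hn hτ) h3
    omega
  · have hd : delta p q (a.perm i) - delta p q (a.perm j) ≤ 1 := by
      simp only [delta]
      split_ifs <;> simp_all
    omega

/-! ### The numerical criterion -/

/-- Integer points `e` of the closed fundamental alcove (up to sign): `e_i ≤ e_j + k` for every
positive root `ε_i - ε_j + k`. Height `0` is the vacuous case `i = j`, `k = 0`. -/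
def IsThr (e : Fin n → ℤ) : Prop := ∀ i j k, 0 ≤ ht (i, j, k) → e i ≤ e j + k

/-- The numerical form of the Bruhat order on `ℤⁿ`. -/
def Crit (τ η : Fin n → ℤ) : Prop :=
  ∑ i, τ i = ∑ i, η i ∧
    ∀ e, IsThr e → ∑ i, max (τ i + e i) 0 ≤ ∑ i, max (η i + e i) 0

theorem sum_pair {p q : Fin n} (h : p ≠ q) (F : Fin n → ℤ) :
    ∑ i, F i = F p + F q + ∑ i ∈ (Finset.univ.erase p).erase q, F i := by
  rw [← Finset.add_sum_erase _ F (Finset.mem_univ p),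
    ← Finset.add_sum_erase _ F (Finset.mem_erase.2 ⟨h.symm, Finset.mem_univ q⟩)]
  ring

theorem sum_pair_congr {p q : Fin n} {F G : Fin n → ℤ}
    (hFG : ∀ i, i ≠ p → i ≠ q → F i = G i) :
    ∑ i ∈ (Finset.univ.erase p).erase q, F i = ∑ i ∈ (Finset.univ.erase p).erase q, G i := by
  refine Finset.sum_congr rfl fun i hi => ?_
  simp only [Finset.mem_erase] at hi
  exact hFG i hi.2.1 hi.1

theorem act_left {p q : Fin n} (m : ℤ) (τ : Fin n → ℤ) :
    act (refl p q m) τ p = τ q - m := by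
  simp [act, refl]
  ring

theorem act_right {p q : Fin n} (h : p ≠ q) (m : ℤ) (τ : Fin n → ℤ) :
    act (refl p q m) τ q = τ p + m := by
  simp [act, refl, h.symm]

theorem act_other {p q i : Fin n} (hp : i ≠ p) (hq : i ≠ q) (m : ℤ) (τ : Fin n → ℤ) :
    act (refl p q m) τ i = τ i := by
  simp [act, refl, hp, hq, Equiv.swap_apply_of_ne_of_ne hp hq]

theorem act_act {p q : Fin n} (h : p ≠ q) (m : ℤ) (τ : Fin n → ℤ) :
    act (refl p q m) (act (refl p q m) τ) = τ := by
  funext i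
  rcases eq_or_ne i p with rfl | hp
  · rw [act_left, act_right h]; ring
  · rcases eq_or_ne i q with rfl | hq
    · rw [act_right h, act_left]; ring
    · rw [act_other hp hq, act_other hp hq]

theorem sum_act {p q : Fin n} (h : p ≠ q) (m : ℤ) (τ : Fin n → ℤ) :
    ∑ i, act (refl p q m) τ i = ∑ i, τ i := by
  rw [sum_pair h, sum_pair h τ, act_left, act_right h,
    sum_pair_congr (G := τ) fun i hp hq => act_other hp hq m τ]
  ring

theorem sum_max_act {p q : Fin n} (h : p ≠ q) (m : ℤ) (τ e : Fin n → ℤ) :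
    ∑ i, max (act (refl p q m) τ i + e i) 0 = max (τ q - m + e p) 0 + max (τ p + m + e q) 0 +
      ∑ i ∈ (Finset.univ.erase p).erase q, max (τ i + e i) 0 := by
  rw [sum_pair h, act_left, act_right h,
    sum_pair_congr (G := fun i => max (τ i + e i) 0) fun i hp hq => by rw [act_other hp hq m τ]]

/-- A reflection in a positive root that is nonnegative on `τ` spreads two entries apart, so it
increases the convex sums in the criterion. -/
theorem crit_act {p q : Fin n} (h : p ≠ q) {m : ℤ} (hα : 0 < ht (p, q, m)) (τ : Fin n → ℤ)
    (hτ : 0 ≤ τ p - τ q + m) : Crit τ (act (refl p q m) τ) := by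
  refine ⟨(sum_act h m τ).symm, fun e he => ?_⟩
  have := he p q m hα.le
  rw [sum_max_act h, sum_pair h]
  omega

theorem crit_of_bruhatLe {a b : AffW n} (hab : BruhatLe a b) : Crit a.tr b.tr := by
  induction hab with
  | refl => exact ⟨rfl, fun _ _ => le_rfl⟩
  | @tail z y _ hzy ih =>
    obtain ⟨i, j, k, hij, h₁, h₂, rfl⟩ := (bruhatStep_iff _ _).1 hzy
    have hk := nonneg_of_ht h₁.le
    rw [mul_refl]
    have hc := crit_act (p := z.perm i) (q := z.perm j)
      (m := k - z.tr (z.perm i) + z.tr (z.perm j)) (by simpa using hij) h₂ z.tr (by omega)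
    exact ⟨ih.1.trans hc.1, fun e he => (ih.2 e he).trans (hc.2 e he)⟩

/-- For a simple root `ε_p - ε_q + m` an alcove point either lies on its wall, or can be moved
by one step in the coordinates `q` and `p` inside the alcove. -/
theorem thr_cases {p q : Fin n} (h : p ≠ q) {m : ℤ} (hα : ht (p, q, m) = 1) {e : Fin n → ℤ}
    (he : IsThr e) : e p = m + e q ∨ (e q = e p - m + 1 ∧ IsThr (Function.update e q (e q - 1)) ∧
      IsThr (Function.update e p (e p + 1))) := by
  have hn : 2 ≤ n := by
    have := p.2; have := q.2; have := Fin.val_ne_of_ne h; omega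
  have h1 := he p q m (by omega)
  have h2 := he q p (1 - m) (by
    simp only [ht, mul_sub, mul_one] at hα ⊢
    omega)
  rcases eq_or_ne (e p) (m + e q) with hw | hw
  · exact Or.inl hw
  refine Or.inr ⟨by omega, ?_, ?_⟩
  · intro i j k hk
    have hk0 := nonneg_of_ht hk
    have hik := he i j k hk
    rcases eq_or_ne j q with rfl | hj
    · rcases eq_or_ne i j with rfl | hi
      · simp [hk0]
      · have hz : ht (i, j, k) ≠ 0 := ht_ne_zero hi
        have := he i p (k - m) (by
          simp only [ht, mul_sub] at hα hk hz ⊢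
          omega)
        simp only [Function.update_self, Function.update_of_ne hi]
        omega
    · rw [Function.update_of_ne hj]
      rcases eq_or_ne i q with rfl | hi
      · simp only [Function.update_self]
        omega
      · rwa [Function.update_of_ne hi]
  · intro i j k hk
    have hk0 := nonneg_of_ht hk
    have hik := he i j k hk
    rcases eq_or_ne i p with rfl | hi
    · rcases eq_or_ne j i with rfl | hj
      · simp [hk0]
      · have hz : ht (i, j, k) ≠ 0 := ht_ne_zero hj.symm
        have := he q j (k - m) (by
          simp only [ht, mul_sub] at hα hk hz ⊢
          omega)
        simp only [Function.update_self, Function.update_of_ne hj]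
        omega
    · rw [Function.update_of_ne hi]
      rcases eq_or_ne j p with rfl | hj
      · simp only [Function.update_self]
        omega
      · rwa [Function.update_of_ne hj]

theorem sum_max_update_right {p q : Fin n} (h : p ≠ q) (τ e : Fin n → ℤ) (x : ℤ) :
    ∑ i, max (τ i + Function.update e q x i) 0 = max (τ p + e p) 0 + max (τ q + x) 0 +
      ∑ i ∈ (Finset.univ.erase p).erase q, max (τ i + e i) 0 := by
  rw [sum_pair h, Function.update_self, Function.update_of_ne h,
    sum_pair_congr (G := fun i => max (τ i + e i) 0) fun i hp hq => by
      rw [Function.update_of_ne hq]]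

theorem sum_max_update_left {p q : Fin n} (h : p ≠ q) (τ e : Fin n → ℤ) (x : ℤ) :
    ∑ i, max (τ i + Function.update e p x i) 0 = max (τ p + x) 0 + max (τ q + e q) 0 +
      ∑ i ∈ (Finset.univ.erase p).erase q, max (τ i + e i) 0 := by
  rw [sum_pair h, Function.update_self, Function.update_of_ne h.symm,
    sum_pair_congr (G := fun i => max (τ i + e i) 0) fun i hp hq => by
      rw [Function.update_of_ne hp]]

/-- The criterion satisfies the same descent recursion as the Bruhat order: if the simple root
`α` is negative on `η`, then `η` may be replaced by `s_α η` once `τ` is replaced by the smaller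
of `τ` and `s_α τ`. -/
theorem crit_descend {p q : Fin n} (h : p ≠ q) {m : ℤ} (hα : ht (p, q, m) = 1) {τ η : Fin n → ℤ}
    (hη : η p - η q + m < 0) (hc : Crit τ η) :
    (0 ≤ τ p - τ q + m → Crit τ (act (refl p q m) η)) ∧
      (τ p - τ q + m < 0 → Crit (act (refl p q m) τ) (act (refl p q m) η)) := by
  refine ⟨fun hτ => ⟨by rw [sum_act h]; exact hc.1, fun e he => ?_⟩,
    fun hτ => ⟨by rw [sum_act h, sum_act h]; exact hc.1, fun e he => ?_⟩⟩
  all_goals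
    have h0 := hc.2 e he
    rw [sum_pair h (fun i => max (τ i + e i) 0), sum_pair h (fun i => max (η i + e i) 0)] at h0
    rw [sum_max_act h m η]
    first
    | rw [sum_max_act h m τ]
    | rw [sum_pair h (fun i => max (τ i + e i) 0)]
    rcases thr_cases h hα he with hw | ⟨hw, h1, h2⟩
    · omega
    · have h1 := hc.2 _ h1
      have h2 := hc.2 _ h2
      rw [sum_max_update_right h, sum_max_update_right h] at h1
      rw [sum_max_update_left h, sum_max_update_left h] at h2
      omega

/-- If all simple roots are nonnegative on `η`, then so are all positive roots, by induction on
the height; that is, `-η` lies in the alcove. -/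
theorem isThr_neg {η : Fin n → ℤ}
    (hη : ∀ (p q : Fin n) (m : ℤ), p ≠ q → ht (p, q, m) = 1 → 0 ≤ η p - η q + m) :
    IsThr (-η) := by
  have main : ∀ (N : ℕ) (i j : Fin n) (k : ℤ), ht (i, j, k) = N → 0 ≤ η i - η j + k := by
    intro N
    induction N with
    | zero =>
      intro i j k hk
      obtain ⟨rfl, rfl⟩ := eq_of_mul_add (i := i) (j := j) (k := k) (by simpa [ht] using hk)
      simp
    | succ N ih =>
      intro i j k hk
      have hi := i.2
      have hj := j.2
      by_cases hn : n = 1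
      · have hij : i = j := Fin.ext (by omega)
        have := nonneg_of_ht (i := i) (j := j) (k := k) (by omega)
        subst hij
        omega
      rcases Nat.eq_zero_or_pos (j : ℕ) with h0 | h0
      · have h1 := ih i ⟨n - 1, by omega⟩ (k - 1) (by
          simp only [ht, mul_sub] at hk ⊢
          omega)
        have h2 := hη ⟨n - 1, by omega⟩ j 1 (fun e => by
          have := congrArg Fin.val e
          simp only at this
          omega) (by simp only [ht]; omega)
        omega
      · have h1 := ih i ⟨j - 1, by omega⟩ k (by
          simp only [ht] at hk ⊢
          omega)
        have h2 := hη ⟨j - 1, by omega⟩ j 0 (fun e => by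
          have := congrArg Fin.val e
          simp only at this
          omega) (by simp only [ht]; omega)
        omega
  intro i j k hk
  have := main (ht (i, j, k)).toNat i j k (by omega)
  simp only [Pi.neg_apply]
  omega

theorem eq_of_crit {τ η : Fin n → ℤ} (hη : IsThr (-η)) (hc : Crit τ η) : τ = η := by
  have h := hc.2 _ hη
  simp only [Pi.neg_apply, add_neg_cancel, max_self, Finset.sum_const_zero] at h
  have hle : ∀ i ∈ Finset.univ, τ i ≤ η i := by
    intro i hi
    have := Finset.single_le_sum (f := fun i => max (τ i + -η i) 0)
      (fun _ _ => le_max_right _ _) hi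
    omega
  funext i
  exact (Finset.sum_eq_sum_iff_of_le hle).1 hc.1 i (Finset.mem_univ i)

theorem xLe_of_crit (N : ℕ) : ∀ {τ η : Fin n → ℤ}, len (minRep η) = N → Crit τ η → XLe τ η := by
  induction N using Nat.strong_induction_on with
  | _ N ih =>
    intro τ η hN hc
    by_cases hη : ∀ (p q : Fin n) (m : ℤ), p ≠ q → ht (p, q, m) = 1 → 0 ≤ η p - η q + m
    · rw [eq_of_crit (isThr_neg hη) hc]
      exact Relation.ReflTransGen.refl
    push Not at hη
    obtain ⟨p, q, m, h, hα, hneg⟩ := hη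
    have hup : ∀ ξ : Fin n → ℤ, ξ p - ξ q + m < 0 →
        minRep ξ = mul (refl p q m) (minRep (act (refl p q m) ξ)) := by
      intro ξ hξ
      rw [← minRep_act h hα, act_act h]
      rw [act_left, act_right h]
      omega
    have hstep : BruhatStep (minRep (act (refl p q m) η)) (minRep η) := by
      rw [hup η hneg]
      refine step_left _ h m (by omega) ?_
      change 0 < act (refl p q m) η p - act (refl p q m) η q + m
      rw [act_left, act_right h]
      omega
    have hlt := hstep.2
    rw [hN] at hlt
    have hd := crit_descend h hα hneg hc
    by_cases hτ : 0 ≤ τ p - τ q + m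
    · exact Relation.ReflTransGen.tail (ih _ hlt rfl (hd.1 hτ)) hstep
    · have hle := ih _ hlt rfl (hd.2 (not_le.1 hτ))
      have hl := lift h hα hle
      rw [← hup τ (not_le.1 hτ), ← hup η hneg] at hl
      rcases hl with hl | hl
      · exact Relation.ReflTransGen.tail hl hstep
      · exact hl

theorem xLe_iff_crit (τ η : Fin n → ℤ) : XLe τ η ↔ Crit τ η :=
  ⟨fun h => crit_of_bruhatLe h, fun h => xLe_of_crit _ rfl h⟩

/-! ### Deleting an entry -/

theorem isThr_iff (e : Fin n → ℤ) :
    IsThr e ↔ ∀ i j, e i ≤ e j + 1 ∧ (i ≤ j → e i ≤ e j) := by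
  constructor
  · intro he i j
    refine ⟨he i j 1 (ht_of_pos one_pos).le, fun hij => ?_⟩
    have := he i j 0 (by
      simp only [ht, mul_zero]
      have := Fin.le_def.1 hij
      omega)
    omega
  · intro he i j k hk
    have hk0 := nonneg_of_ht hk
    rcases hk0.eq_or_lt with rfl | hk0
    · simp only [ht, mul_zero] at hk
      have := (he i j).2 (Fin.le_def.2 (by omega))
      omega
    · have := (he i j).1
      omega

theorem isThr_comp {e : Fin (n + 1) → ℤ} (i : Fin (n + 1)) (he : IsThr e) :
    IsThr (e ∘ i.succAbove) := by
  rw [isThr_iff] at he ⊢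
  exact fun a b => ⟨(he _ _).1, fun hab => (he _ _).2 (Fin.succAbove_le_succAbove_iff.2 hab)⟩

/-- Every alcove point extends over a new coordinate: it takes the value of a neighbouring
coordinate. -/
theorem isThr_extend {e : Fin n → ℤ} (i : Fin (n + 1)) (he : IsThr e) :
    ∃ e' : Fin (n + 1) → ℤ, IsThr e' ∧ e' ∘ i.succAbove = e := by
  rw [isThr_iff] at he
  obtain ⟨x, hx⟩ : ∃ x : ℤ, ∀ k, x ≤ e k + 1 ∧ e k ≤ x + 1 ∧
      (i ≤ i.succAbove k → x ≤ e k) ∧ (i.succAbove k ≤ i → e k ≤ x) := by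
    have hlt : ∀ k : Fin n, i ≤ i.succAbove k → (i : ℕ) ≤ k := fun k hk => by
      by_contra hc
      rw [Fin.succAbove_of_castSucc_lt _ _ (Fin.lt_def.2 (by simpa using hc))] at hk
      have := Fin.le_def.1 hk
      simp only [Fin.val_castSucc] at this
      omega
    have hgt : ∀ k : Fin n, i.succAbove k ≤ i → (k : ℕ) < i := fun k hk => by
      by_contra hc
      rw [Fin.succAbove_of_le_castSucc _ _ (Fin.le_def.2 (by simpa using hc))] at hk
      have := Fin.le_def.1 hk
      simp only [Fin.val_succ] at this
      omega
    have hi := i.2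
    rcases Nat.eq_zero_or_pos n with hn | hn
    · subst hn
      exact ⟨0, fun k => k.elim0⟩
    rcases Nat.eq_zero_or_pos (i : ℕ) with h0 | h0
    · refine ⟨e ⟨0, hn⟩, fun k => ⟨(he _ _).1, (he _ _).1, fun _ => (he _ _).2 ?_, fun hk => ?_⟩⟩
      · exact Fin.le_def.2 (Nat.zero_le _)
      · have := hgt k hk
        omega
    · refine ⟨e ⟨i - 1, by omega⟩, fun k => ⟨(he _ _).1, (he _ _).1, fun hk => (he _ _).2 ?_,
        fun hk => (he _ _).2 ?_⟩⟩
      · have := hlt k hk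
        exact Fin.le_def.2 (by simp only; omega)
      · have := hgt k hk
        exact Fin.le_def.2 (by simp only; omega)
  refine ⟨i.insertNth x e, ?_, by funext k; simp⟩
  rw [isThr_iff]
  intro a b
  rcases Fin.eq_self_or_eq_succAbove i a with ha | ⟨a, rfl⟩ <;>
    rcases Fin.eq_self_or_eq_succAbove i b with hb | ⟨b, rfl⟩
  · simp [ha, hb]
  · simpa [ha] using ⟨(hx b).1, (hx b).2.2.1⟩
  · simpa [hb] using ⟨(hx a).2.1, (hx a).2.2.2⟩
  · simpa using he a b

theorem crit_delete (i : Fin (n + 1)) {τ η : Fin (n + 1) → ℤ} (h : τ i = η i) :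
    Crit τ η ↔ Crit (τ ∘ i.succAbove) (η ∘ i.succAbove) := by
  simp only [Crit, Fin.sum_univ_succAbove _ i, h, add_right_inj, add_le_add_iff_left,
    Function.comp_apply]
  refine and_congr_right fun _ => ⟨fun hc e he => ?_, fun hc e he => hc _ (isThr_comp i he)⟩
  obtain ⟨e', he', rfl⟩ := isThr_extend i he
  exact hc e' he'

end AffW

open AffW in
/-- Deleting a common entry is compatible with the Bruhat order on `ℤⁿ`:
if `λ, μ ∈ ℤ^{n+1}` have the same `i`-th entry, then `λ ≤ μ` iff the vectors
obtained by omitting the `i`-th entry satisfy `λ' ≤ μ'` in `ℤⁿ`. -/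
theorem bruhat_delete_entry (n : ℕ) (i : Fin (n + 1)) (lam mu : Fin (n + 1) → ℤ)
    (h : lam i = mu i) :
    XLe lam mu ↔ XLe (lam ∘ i.succAbove) (mu ∘ i.succAbove) := by
  rw [xLe_iff_crit, xLe_iff_crit, crit_delete i h]
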